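/- Let λ0 ∈ ℝ, let g be an exchangeable prior, and let d be a pseudo symmetric design with c_{d22} > 0 and q_d(x_d) > 0. Then d is E_{g,λ0}-optimal if and only if max_{s∈S} q_s(x_d)/q_d(x_d) = 1. Moreover, in that case every sequence s with p_s > 0 attains this maximum. -/

import Mathlib

open Matrix MeasureTheory
open scoped Classical

noncomputable section

/-- A treatment sequence: assigns a treatment in `Fin t` to each period in `Fin p`. -/
abbrev TrtSeq (p t : ℕ) := Fin p → Fin t

/-- Treatment/period incidence matrix `T_s`. -/
def Tmat {p t : ℕ} (s : TrtSeq p t) : Matrix (Fin p) (Fin t) ℝ :=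
  Matrix.of fun k i => if s k = i then 1 else 0

/-- Carryover incidence matrix `F_s`: first row zero, row `k` records the treatment
in period `k-1`. -/
def Fmat {p t : ℕ} (s : TrtSeq p t) : Matrix (Fin p) (Fin t) ℝ :=
  Matrix.of fun k i =>
    if (k : ℕ) = 0 then 0
    else if s ⟨(k : ℕ) - 1, Nat.lt_of_le_of_lt (Nat.sub_le _ _) k.isLt⟩ = i then 1 else 0

/-- The all-ones `m × m` matrix `J_m`. -/
def Jmat (m : ℕ) : Matrix (Fin m) (Fin m) ℝ := Matrix.of fun _ _ => 1

/-- `B_t = I_t - J_t / t`. -/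
def Bmat (t : ℕ) : Matrix (Fin t) (Fin t) ℝ := 1 - ((t : ℝ))⁻¹ • Jmat t

/-- `B̃ = Σ⁻¹ - Σ⁻¹ J_p Σ⁻¹ / (1_p' Σ⁻¹ 1_p)`. -/
def Btil {p : ℕ} (S : Matrix (Fin p) (Fin p) ℝ) : Matrix (Fin p) (Fin p) ℝ :=
  S⁻¹ - (((fun _ => (1 : ℝ)) : Fin p → ℝ) ⬝ᵥ (S⁻¹ *ᵥ fun _ => (1 : ℝ)))⁻¹ •
    (S⁻¹ * Jmat p * S⁻¹)

/-- `G_1(s) = T_s`, `G_2(s) = F_s`. -/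
def Gmat {p t : ℕ} (i : Fin 2) (s : TrtSeq p t) : Matrix (Fin p) (Fin t) ℝ :=
  if i = 0 then Tmat s else Fmat s

/-- An approximate design: nonnegative weights summing to one. -/
def IsDesign {p t : ℕ} (w : TrtSeq p t → ℝ) : Prop :=
  (∀ s, 0 ≤ w s) ∧ ∑ s : TrtSeq p t, w s = 1

/-- `Ĉ_{sij} = B_t G_i(s)' B̃ G_j(s) B_t`. -/
def Chat {p t : ℕ} (S : Matrix (Fin p) (Fin p) ℝ) (s : TrtSeq p t) (i j : Fin 2) :
    Matrix (Fin t) (Fin t) ℝ :=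
  Bmat t * (Gmat i s)ᵀ * Btil S * Gmat j s * Bmat t

/-- `c_{sij} = tr Ĉ_{sij}`. -/
def cseq {p t : ℕ} (S : Matrix (Fin p) (Fin p) ℝ) (s : TrtSeq p t) (i j : Fin 2) : ℝ :=
  (Chat S s i j).trace

/-- `Ĉ_{dij} = n ∑_s p_s Ĉ_{sij}`. -/
def ChatD {p t : ℕ} (n : ℕ) (S : Matrix (Fin p) (Fin p) ℝ) (w : TrtSeq p t → ℝ)
    (i j : Fin 2) : Matrix (Fin t) (Fin t) ℝ :=
  (n : ℝ) • ∑ s : TrtSeq p t, w s • Chat S s i j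

/-- `C_{dij} = Ĉ_{dij} - n (∑_s p_s G_i(s) B_t)' B̃ (∑_s p_s G_j(s) B_t)`. -/
def CD {p t : ℕ} (n : ℕ) (S : Matrix (Fin p) (Fin p) ℝ) (w : TrtSeq p t → ℝ)
    (i j : Fin 2) : Matrix (Fin t) (Fin t) ℝ :=
  ChatD n S w i j -
    (n : ℝ) • ((∑ s : TrtSeq p t, w s • (Gmat i s * Bmat t))ᵀ * Btil S *
      (∑ s : TrtSeq p t, w s • (Gmat j s * Bmat t)))

/-- `c_{dij} = tr Ĉ_{dij} = n ∑_s p_s c_{sij}`. -/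
def cD {p t : ℕ} (n : ℕ) (S : Matrix (Fin p) (Fin p) ℝ) (w : TrtSeq p t → ℝ)
    (i j : Fin 2) : ℝ :=
  (ChatD n S w i j).trace

/-- Fisher information matrix `C_{d,τ0,λ0}` for the direct treatment effects under the
proportional model. -/
def CInfo {p t : ℕ} (n : ℕ) (S : Matrix (Fin p) (Fin p) ℝ) (w : TrtSeq p t → ℝ)
    (τ0 : Fin t → ℝ) (l0 : ℝ) : Matrix (Fin t) (Fin t) ℝ :=
  CD n S w 0 0 + l0 • (CD n S w 0 1 + CD n S w 1 0) + (l0 ^ 2) • CD n S w 1 1 -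
    (τ0 ⬝ᵥ (CD n S w 1 1 *ᵥ τ0))⁻¹ •
      ((CD n S w 0 1 + l0 • CD n S w 1 1) * vecMulVec τ0 τ0 *
        (CD n S w 1 0 + l0 • CD n S w 1 1))

/-- Permutation matrix `S_σ` with `(S_σ)_{j,i} = 1` iff `i = σ j`. -/
def Smat {t : ℕ} (σ : Equiv.Perm (Fin t)) : Matrix (Fin t) (Fin t) ℝ :=
  Matrix.of fun j i => if i = σ j then 1 else 0

/-- The relabelled sequence `σ ∘ s`. -/
def permSeq {p t : ℕ} (σ : Equiv.Perm (Fin t)) (s : TrtSeq p t) : TrtSeq p t := fun k => σ (s k)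

/-- The design `σ d`, with weights `(σd)_s = p_{σ⁻¹ ∘ s}`. -/
def permDesign {p t : ℕ} (σ : Equiv.Perm (Fin t)) (w : TrtSeq p t → ℝ) : TrtSeq p t → ℝ :=
  fun s => w (permSeq σ⁻¹ s)

/-- A design is symmetric if its weights are invariant under treatment relabelling. -/
def IsSymmetricDesign {p t : ℕ} (w : TrtSeq p t → ℝ) : Prop :=
  ∀ (σ : Equiv.Perm (Fin t)) (s : TrtSeq p t), w (permSeq σ s) = w s

/-- The symmetrized design `d*` with weights `p*_s = (1/t!) ∑_σ p_{σ⁻¹ ∘ s}`. -/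
def symmetrize {p t : ℕ} (w : TrtSeq p t → ℝ) : TrtSeq p t → ℝ :=
  fun s => ((Nat.factorial t : ℝ))⁻¹ * ∑ σ : Equiv.Perm (Fin t), permDesign σ w s

/-- `q_s(x) = c_{s11} + 2 c_{s12} x + c_{s22} x²`. -/
def qSeq {p t : ℕ} (S : Matrix (Fin p) (Fin p) ℝ) (s : TrtSeq p t) (x : ℝ) : ℝ :=
  cseq S s 0 0 + 2 * cseq S s 0 1 * x + cseq S s 1 1 * x ^ 2

/-- `q(x) = max_{s ∈ S} q_s(x)`. -/
def qMax (p t : ℕ) (S : Matrix (Fin p) (Fin p) ℝ) (x : ℝ) : ℝ :=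
  sSup (Set.range fun s : TrtSeq p t => qSeq S s x)

/-- `y* = inf_x q(x)`. -/
def yStar (p t : ℕ) (S : Matrix (Fin p) (Fin p) ℝ) : ℝ := ⨅ x : ℝ, qMax p t S x

/-- `q_d(x) = ∑_s p_s q_s(x)`. -/
def qD {p t : ℕ} (S : Matrix (Fin p) (Fin p) ℝ) (w : TrtSeq p t → ℝ) (x : ℝ) : ℝ :=
  ∑ s : TrtSeq p t, w s * qSeq S s x

/-- `x_d = -c_{d12}/c_{d22}`. -/
def xD {p t : ℕ} (n : ℕ) (S : Matrix (Fin p) (Fin p) ℝ) (w : TrtSeq p t → ℝ) : ℝ :=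
  -(cD n S w 0 1) / cD n S w 1 1

/-- An exchangeable prior: a probability measure on `{τ : 1'τ = 0, τ ≠ 0}` that is
invariant under all coordinate permutations of `ℝ^t`. -/
def IsExchangeablePrior {t : ℕ} (g : Measure (Fin t → ℝ)) : Prop :=
  IsProbabilityMeasure g ∧
    g {τ : Fin t → ℝ | ¬((∑ i, τ i) = 0 ∧ τ ≠ 0)} = 0 ∧
    ∀ σ : Equiv.Perm (Fin t), Measure.map (fun τ i => τ (σ i)) g = g

/-- `m_d(τ0) = min {ℓ' C_{d,τ0,λ0} ℓ : 1'ℓ = 0, ℓ'ℓ = 1}`. -/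
def mD {p t : ℕ} (n : ℕ) (S : Matrix (Fin p) (Fin p) ℝ) (w : TrtSeq p t → ℝ) (l0 : ℝ)
    (τ0 : Fin t → ℝ) : ℝ :=
  sInf {v : ℝ | ∃ l : Fin t → ℝ, (∑ i, l i) = 0 ∧ l ⬝ᵥ l = 1 ∧
    v = l ⬝ᵥ (CInfo n S w τ0 l0 *ᵥ l)}

/-- The E-criterion value `E_{g,λ0}(d) = ∫ m_d(τ0) g(dτ0)`. -/
def Ecrit {p t : ℕ} (n : ℕ) (S : Matrix (Fin p) (Fin p) ℝ) (g : Measure (Fin t → ℝ))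
    (l0 : ℝ) (w : TrtSeq p t → ℝ) : ℝ :=
  ∫ τ0, mD n S w l0 τ0 ∂g

/-- Competing designs for E-optimality: designs with a.e. positive `τ0' C_{d22} τ0`
and `g`-integrable `m_d`. -/
def EAdmissible {p t : ℕ} (n : ℕ) (S : Matrix (Fin p) (Fin p) ℝ) (g : Measure (Fin t → ℝ))
    (l0 : ℝ) (w : TrtSeq p t → ℝ) : Prop :=
  IsDesign w ∧ (∀ᵐ τ0 ∂g, 0 < τ0 ⬝ᵥ (CD n S w 1 1 *ᵥ τ0)) ∧
    Integrable (mD n S w l0) g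

/-- `d` is `E_{g,λ0}`-optimal. -/
def EOptimal {p t : ℕ} (n : ℕ) (S : Matrix (Fin p) (Fin p) ℝ) (g : Measure (Fin t → ℝ))
    (l0 : ℝ) (w : TrtSeq p t → ℝ) : Prop :=
  ∀ w' : TrtSeq p t → ℝ, EAdmissible n S g l0 w' → Ecrit n S g l0 w' ≤ Ecrit n S g l0 w

/-- A pseudo symmetric design: treatments equireplicated in each period,
and all `C_{dij}` completely symmetric. -/
def IsPseudoSymmetric {p t : ℕ} (n : ℕ) (S : Matrix (Fin p) (Fin p) ℝ)
    (w : TrtSeq p t → ℝ) : Prop :=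
  (∀ (k : Fin p) (i : Fin t),
    (∑ s ∈ Finset.univ.filter fun s : TrtSeq p t => s k = i, w s) = 1 / (t : ℝ)) ∧
  ∀ i j : Fin 2, ∃ a b : ℝ, CD n S w i j = a • (1 : Matrix (Fin t) (Fin t) ℝ) + b • Jmat t

/-- Eigenvalues of a (Hermitian) matrix sorted increasingly with multiplicity. -/
def sortedEigs {t : ℕ} (C : Matrix (Fin t) (Fin t) ℝ) : Fin t → ℝ :=
  if h : C.IsHermitian then (fun i => h.eigenvalues (Tuple.sort h.eigenvalues i))
  else fun _ => 0

/-- `Φ_D(C) = (∏_{i=1}^{t-1} a_i)^{1/(t-1)}` (eigenvalues sorted increasingly). -/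
def PhiD {t : ℕ} (C : Matrix (Fin t) (Fin t) ℝ) : ℝ :=
  (∏ i ∈ Finset.univ.filter fun i : Fin t => (i : ℕ) ≠ 0, sortedEigs C i) ^ (((t : ℝ) - 1)⁻¹)

/-- `Φ_A(C) = (t-1)(∑_{i=1}^{t-1} a_i⁻¹)⁻¹` if `a_1 > 0`, else `0`. -/
def PhiA {t : ℕ} (C : Matrix (Fin t) (Fin t) ℝ) : ℝ :=
  if ∀ i : Fin t, (i : ℕ) ≠ 0 → 0 < sortedEigs C i then
    ((t : ℝ) - 1) *
      (∑ i ∈ Finset.univ.filter fun i : Fin t => (i : ℕ) ≠ 0, (sortedEigs C i)⁻¹)⁻¹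
  else 0

/-- `Φ_T(C) = tr(C)/(t-1)`. -/
def PhiT {t : ℕ} (C : Matrix (Fin t) (Fin t) ℝ) : ℝ := C.trace / ((t : ℝ) - 1)

/-- The criterion value `∫ Φ(C_{d,τ0,λ0}) g(dτ0)`. -/
def PhiCrit {p t : ℕ} (n : ℕ) (S : Matrix (Fin p) (Fin p) ℝ)
    (Phi : Matrix (Fin t) (Fin t) ℝ → ℝ) (g : Measure (Fin t → ℝ)) (l0 : ℝ)
    (w : TrtSeq p t → ℝ) : ℝ :=
  ∫ τ0, Phi (CInfo n S w τ0 l0) ∂g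

/-- Competing designs for a `Φ`-criterion. -/
def PhiAdmissible {p t : ℕ} (n : ℕ) (S : Matrix (Fin p) (Fin p) ℝ)
    (Phi : Matrix (Fin t) (Fin t) ℝ → ℝ) (g : Measure (Fin t → ℝ)) (l0 : ℝ)
    (w : TrtSeq p t → ℝ) : Prop :=
  IsDesign w ∧ (∀ᵐ τ0 ∂g, 0 < τ0 ⬝ᵥ (CD n S w 1 1 *ᵥ τ0)) ∧
    Integrable (fun τ0 => Phi (CInfo n S w τ0 l0)) g

/-- `d` is `Φ_{g,λ0}`-optimal. -/
def PhiOptimal {p t : ℕ} (n : ℕ) (S : Matrix (Fin p) (Fin p) ℝ)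
    (Phi : Matrix (Fin t) (Fin t) ℝ → ℝ) (g : Measure (Fin t → ℝ)) (l0 : ℝ)
    (w : TrtSeq p t → ℝ) : Prop :=
  ∀ w' : TrtSeq p t → ℝ, PhiAdmissible n S Phi g l0 w' →
    PhiCrit n S Phi g l0 w' ≤ PhiCrit n S Phi g l0 w

/-- `H_1(s) = F_s`, `H_2(s) = T_s + λ0 F_s` (for estimating `λ`). -/
def Hmat {p t : ℕ} (l0 : ℝ) (i : Fin 2) (s : TrtSeq p t) : Matrix (Fin p) (Fin t) ℝ :=
  if i = 0 then Fmat s else Tmat s + l0 • Fmat s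

/-- `Â_{sij} = B_t H_i(s)' B̃ H_j(s) B_t`. -/
def Ahat {p t : ℕ} (S : Matrix (Fin p) (Fin p) ℝ) (l0 : ℝ) (s : TrtSeq p t) (i j : Fin 2) :
    Matrix (Fin t) (Fin t) ℝ :=
  Bmat t * (Hmat l0 i s)ᵀ * Btil S * Hmat l0 j s * Bmat t

/-- `h_{sij} = tr Â_{sij}`. -/
def hseq {p t : ℕ} (S : Matrix (Fin p) (Fin p) ℝ) (l0 : ℝ) (s : TrtSeq p t) (i j : Fin 2) : ℝ :=
  (Ahat S l0 s i j).trace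

/-- `Â_{dij} = n ∑_s p_s Â_{sij}`. -/
def AhatD {p t : ℕ} (n : ℕ) (S : Matrix (Fin p) (Fin p) ℝ) (l0 : ℝ) (w : TrtSeq p t → ℝ)
    (i j : Fin 2) : Matrix (Fin t) (Fin t) ℝ :=
  (n : ℝ) • ∑ s : TrtSeq p t, w s • Ahat S l0 s i j

/-- `A_{dij} = Â_{dij} - n (∑_s p_s H_i(s) B_t)' B̃ (∑_s p_s H_j(s) B_t)`. -/
def AD {p t : ℕ} (n : ℕ) (S : Matrix (Fin p) (Fin p) ℝ) (l0 : ℝ) (w : TrtSeq p t → ℝ)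
    (i j : Fin 2) : Matrix (Fin t) (Fin t) ℝ :=
  AhatD n S l0 w i j -
    (n : ℝ) • ((∑ s : TrtSeq p t, w s • (Hmat l0 i s * Bmat t))ᵀ * Btil S *
      (∑ s : TrtSeq p t, w s • (Hmat l0 j s * Bmat t)))

/-- `G` is a generalized inverse of `A`. -/
def IsGInv {t : ℕ} (A G : Matrix (Fin t) (Fin t) ℝ) : Prop := A * G * A = A

/-- `A_d(G) = A_{d11} - A_{d12} G A_{d21}` with `A_{d21} = A_{d12}'`. -/
def ADfun {p t : ℕ} (n : ℕ) (S : Matrix (Fin p) (Fin p) ℝ) (l0 : ℝ) (w : TrtSeq p t → ℝ)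
    (G : Matrix (Fin t) (Fin t) ℝ) : Matrix (Fin t) (Fin t) ℝ :=
  AD n S l0 w 0 0 - AD n S l0 w 0 1 * G * (AD n S l0 w 0 1)ᵀ

/-- `r_s(x) = h_{s11} + 2 h_{s12} x + h_{s22} x²`. -/
def rSeq {p t : ℕ} (S : Matrix (Fin p) (Fin p) ℝ) (l0 : ℝ) (s : TrtSeq p t) (x : ℝ) : ℝ :=
  hseq S l0 s 0 0 + 2 * hseq S l0 s 0 1 * x + hseq S l0 s 1 1 * x ^ 2

/-- `r(x) = max_s r_s(x)`. -/
def rMax (p t : ℕ) (S : Matrix (Fin p) (Fin p) ℝ) (l0 : ℝ) (x : ℝ) : ℝ :=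
  sSup (Set.range fun s : TrtSeq p t => rSeq S l0 s x)

/-- `y_0 = inf_x r(x)`. -/
def yZero (p t : ℕ) (S : Matrix (Fin p) (Fin p) ℝ) (l0 : ℝ) : ℝ := ⨅ x : ℝ, rMax p t S l0 x

/-!
At `ℓ = τ₀` the quadratic form of `C_{d,τ₀,λ₀}` equals `a - b² / c`, where `a`, `b`, `c` are the
values at `τ₀` of the forms of `C_{d11}`, `C_{d12}`, `C_{d22}`. This is free of `λ₀` and, on
completing the square, at most `a + 2 b x + c x²` for every `x`; replacing the `C_{dij}` by the
`Ĉ_{dij}` only increases the latter, as `B̃` is positive semidefinite. For an exchangeable prior the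
second moments of `τ₀ / ‖τ₀‖` form the matrix `B_t / (t - 1)`, so integration yields
`E(d') ≤ n q_{d'}(x) / (t - 1)` for every `x`. A pseudo symmetric `d` attains this bound at
`x = x_d`, because its minimum over `ℓ` is attained at `τ₀`. Hence `d` is optimal as soon as
`q_s(x_d) ≤ q_d(x_d)` for all `s`.

Conversely, mix `d` with the symmetrization of a single sequence `s`, with weights `1 - ε` and `ε`.
The mixture `u` is pseudo symmetric, so optimality of `d` gives `q_u(x_u) ≤ q_d(x_d) ≤ q_d(x_u)`,
whence `q_s(x_u) ≤ q_d(x_u)`. Let `ε → 0`.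
-/

section Averages

variable {ι : Type*} [Fintype ι] {w f : ι → ℝ}

lemma eq_of_weightedSum_eq_of_le {m : ℝ} (hw : w ∈ stdSimplex ℝ ι) (hle : ∀ i, f i ≤ m)
    (hm : ∑ i, w i * f i = m) {i : ι} (hi : 0 < w i) : f i = m := by
  have hgap : ∑ j, w j * (m - f j) = 0 := by
    simp only [mul_sub, Finset.sum_sub_distrib, ← Finset.sum_mul, hw.2, one_mul, hm, sub_self]
  have hterm : w i * (m - f i) = 0 :=
    (Finset.sum_eq_zero_iff_of_nonneg fun j _ =>
      mul_nonneg (hw.1 j) (sub_nonneg.2 (hle j))).1 hgap i (Finset.mem_univ i)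
  exact (sub_eq_zero.1 ((mul_eq_zero.1 hterm).resolve_left hi.ne')).symm

lemma weightedSum_le_of_le {m : ℝ} (hw : w ∈ stdSimplex ℝ ι) (hle : ∀ i, f i ≤ m) :
    ∑ i, w i * f i ≤ m :=
  calc ∑ i, w i * f i ≤ ∑ i, w i * m :=
        Finset.sum_le_sum fun i _ => mul_le_mul_of_nonneg_left (hle i) (hw.1 i)
    _ = m := by rw [← Finset.sum_mul, hw.2, one_mul]

lemma sSup_range_div_weightedSum_eq_one_iff (hw : w ∈ stdSimplex ℝ ι)
    (hpos : 0 < ∑ i, w i * f i) :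
    sSup (Set.range fun i => f i / ∑ j, w j * f j) = 1 ↔ ∀ i, f i ≤ ∑ j, w j * f j := by
  refine ⟨fun hsup i => (div_le_one hpos).1 ?_, fun hle => IsGreatest.csSup_eq ⟨?_, ?_⟩⟩
  · exact hsup ▸ le_csSup (Set.finite_range _).bddAbove ⟨i, rfl⟩
  · obtain ⟨i, -, hi⟩ : ∃ i ∈ Finset.univ, 0 < w i :=
      Finset.exists_lt_of_sum_lt (by simp [hw.2])
    exact ⟨i, (div_eq_one_iff_eq hpos.ne').2 (eq_of_weightedSum_eq_of_le hw hle rfl hi)⟩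
  · rintro _ ⟨i, rfl⟩
    exact (div_le_one hpos).2 (hle i)

end Averages

section CenteredForms

variable {ι : Type*} [Fintype ι]

lemma dotProduct_self_pos_of_ne_zero {l : ι → ℝ} (hl : l ≠ 0) : 0 < l ⬝ᵥ l := by
  simpa using dotProduct_self_star_pos_iff.2 hl

lemma sq_apply_le_dotProduct_self (l : ι → ℝ) (i : ι) : l i ^ 2 ≤ l ⬝ᵥ l := by
  rw [sq]
  exact Finset.single_le_sum (f := fun i => l i * l i) (fun j _ => mul_self_nonneg _)
    (Finset.mem_univ i)

lemma sq_dotProduct_le (l m : ι → ℝ) : (l ⬝ᵥ m) ^ 2 ≤ (l ⬝ᵥ l) * (m ⬝ᵥ m) := by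
  simpa only [dotProduct, sq] using Finset.sum_mul_sq_le_sq_mul_sq Finset.univ l m

/-- The values of the quadratic form of `M` at centered unit vectors. -/
def centeredFormRange (M : Matrix ι ι ℝ) : Set ℝ :=
  {v : ℝ | ∃ l : ι → ℝ, ∑ i, l i = 0 ∧ l ⬝ᵥ l = 1 ∧ v = l ⬝ᵥ (M *ᵥ l)}

/-- The minimum of the quadratic form of `M` over centered unit vectors, that is, the value of the
E-criterion at an information matrix `M`. -/
def centeredMin (M : Matrix ι ι ℝ) : ℝ := sInf (centeredFormRange M)

lemma bddBelow_centeredFormRange (M : Matrix ι ι ℝ) : BddBelow (centeredFormRange M) := by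
  have hcont : Continuous fun l : ι → ℝ => l ⬝ᵥ (M *ᵥ l) := by fun_prop
  refine ((isCompact_closedBall (0 : ι → ℝ) 1).bddBelow_image hcont.continuousOn).mono ?_
  rintro _ ⟨l, -, hl, rfl⟩
  refine Set.mem_image_of_mem _ (mem_closedBall_zero_iff.2 ?_)
  refine (pi_norm_le_iff_of_nonneg zero_le_one).2 fun i => abs_le_one_iff_mul_self_le_one.2 ?_
  rw [← sq, ← hl]
  exact sq_apply_le_dotProduct_self l i

lemma rayleigh_mem_centeredFormRange (M : Matrix ι ι ℝ) {l : ι → ℝ} (hl : ∑ i, l i = 0)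
    (hl0 : l ≠ 0) :
    l ⬝ᵥ (M *ᵥ l) / (l ⬝ᵥ l) ∈ centeredFormRange M := by
  have hpos := dotProduct_self_pos_of_ne_zero hl0
  obtain ⟨r, hr⟩ : ∃ r : ℝ, r ^ 2 = (l ⬝ᵥ l)⁻¹ := ⟨√(l ⬝ᵥ l)⁻¹, Real.sq_sqrt (by positivity)⟩
  refine ⟨r • l, ?_, ?_, ?_⟩
  · simp only [Pi.smul_apply, ← Finset.smul_sum, hl, smul_zero]
  · rw [smul_dotProduct, dotProduct_smul, smul_smul, ← sq, hr, smul_eq_mul,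
      inv_mul_cancel₀ hpos.ne']
  · rw [mulVec_smul, smul_dotProduct, dotProduct_smul, smul_smul, ← sq, hr, smul_eq_mul,
      div_eq_inv_mul]

lemma centeredMin_le (M : Matrix ι ι ℝ) {l : ι → ℝ} (hl : ∑ i, l i = 0) (hl0 : l ≠ 0) :
    centeredMin M ≤ l ⬝ᵥ (M *ᵥ l) / (l ⬝ᵥ l) :=
  csInf_le (bddBelow_centeredFormRange M) (rayleigh_mem_centeredFormRange M hl hl0)

lemma centeredMin_eq_of_forall_le {M : Matrix ι ι ℝ} {c : ℝ} {τ : ι → ℝ} (hτ : ∑ i, τ i = 0)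
    (hτ0 : τ ≠ 0) (hmin : τ ⬝ᵥ (M *ᵥ τ) = c * (τ ⬝ᵥ τ))
    (hle : ∀ l : ι → ℝ, ∑ i, l i = 0 → c * (l ⬝ᵥ l) ≤ l ⬝ᵥ (M *ᵥ l)) : centeredMin M = c := by
  have hpos := dotProduct_self_pos_of_ne_zero hτ0
  refine le_antisymm ((centeredMin_le M hτ hτ0).trans_eq ?_) (le_csInf ?_ ?_)
  · rw [hmin, mul_div_cancel_right₀ _ hpos.ne']
  · exact ⟨_, rayleigh_mem_centeredFormRange M hτ hτ0⟩
  · rintro _ ⟨l, hl, hl1, rfl⟩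
    simpa only [hl1, mul_one] using hle l hl

end CenteredForms

section Moments

variable {ι : Type*} [Fintype ι]

lemma integrable_mul_div_dotProduct_self (g : Measure (ι → ℝ)) [IsFiniteMeasure g] (i j : ι) :
    Integrable (fun τ : ι → ℝ => τ i * τ j / (τ ⬝ᵥ τ)) g := by
  have hmeas : Measurable fun τ : ι → ℝ => τ i * τ j / (τ ⬝ᵥ τ) := by
    unfold dotProduct
    fun_prop
  refine Integrable.of_bound hmeas.aestronglyMeasurable 1 (.of_forall fun τ => ?_)
  have hnonneg : 0 ≤ τ ⬝ᵥ τ := (sq_nonneg _).trans (sq_apply_le_dotProduct_self τ i)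
  have hnum : |τ i * τ j| ≤ τ ⬝ᵥ τ := by
    refine abs_le_of_sq_le_sq ?_ hnonneg
    rw [mul_pow, sq (τ ⬝ᵥ τ)]
    gcongr <;> exact sq_apply_le_dotProduct_self τ _
  rw [Real.norm_eq_abs, abs_div, abs_of_nonneg hnonneg]
  exact div_le_one_of_le₀ hnum hnonneg

/-- The second-moment matrix of the direction `τ / ‖τ‖` of a random vector `τ` with law `g`.
The direction of `τ = 0` counts as zero. -/
def directionMoment (g : Measure (ι → ℝ)) : Matrix ι ι ℝ :=
  .of fun i j => ∫ τ : ι → ℝ, τ i * τ j / (τ ⬝ᵥ τ) ∂g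

lemma rayleigh_eq_sum (Q : Matrix ι ι ℝ) (τ : ι → ℝ) :
    τ ⬝ᵥ (Q *ᵥ τ) / (τ ⬝ᵥ τ) = ∑ i, ∑ j, Q i j * (τ j * τ i / (τ ⬝ᵥ τ)) := by
  simp only [dotProduct, mulVec, Finset.mul_sum, Finset.sum_div]
  refine Finset.sum_congr rfl fun i _ => Finset.sum_congr rfl fun j _ => ?_
  ring

lemma integrable_rayleigh (g : Measure (ι → ℝ)) [IsFiniteMeasure g] (Q : Matrix ι ι ℝ) :
    Integrable (fun τ : ι → ℝ => τ ⬝ᵥ (Q *ᵥ τ) / (τ ⬝ᵥ τ)) g := by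
  simp only [rayleigh_eq_sum]
  exact integrable_finsetSum _ fun i _ => integrable_finsetSum _ fun j _ =>
    (integrable_mul_div_dotProduct_self g j i).const_mul _

lemma integral_rayleigh (g : Measure (ι → ℝ)) [IsFiniteMeasure g] (Q : Matrix ι ι ℝ) :
    ∫ τ : ι → ℝ, τ ⬝ᵥ (Q *ᵥ τ) / (τ ⬝ᵥ τ) ∂g = (Q * directionMoment g).trace := by
  have hterm (i j : ι) := (integrable_mul_div_dotProduct_self g j i).const_mul (Q i j)
  simp only [rayleigh_eq_sum, trace, diag, mul_apply, directionMoment, of_apply]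
  rw [integral_finsetSum _ fun i _ => integrable_finsetSum _ fun j _ => hterm i j]
  refine Finset.sum_congr rfl fun i _ => ?_
  rw [integral_finsetSum _ fun j _ => hterm i j]
  exact Finset.sum_congr rfl fun j _ => integral_const_mul _ _

lemma directionMoment_submatrix {g : Measure (ι → ℝ)} {σ : Equiv.Perm ι}
    (hg : g.map (fun τ i => τ (σ i)) = g) :
    (directionMoment g).submatrix σ σ = directionMoment g := by
  ext i j
  have hmeas : Measurable fun τ : ι → ℝ => τ i * τ j / (τ ⬝ᵥ τ) := by
    unfold dotProduct
    fun_prop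
  have hnorm (τ : ι → ℝ) : (fun k => τ (σ k)) ⬝ᵥ (fun k => τ (σ k)) = τ ⬝ᵥ τ :=
    Equiv.sum_comp σ fun k => τ k * τ k
  simp only [submatrix_apply, directionMoment, of_apply]
  have hperm : Measurable fun (τ : ι → ℝ) k => τ (σ k) := by fun_prop
  conv_rhs => rw [← hg, integral_map hperm.aemeasurable hmeas.aestronglyMeasurable]
  simp only [hnorm]

lemma trace_directionMoment {g : Measure (ι → ℝ)} [IsProbabilityMeasure g]
    (hg : ∀ᵐ τ ∂g, τ ≠ 0) : (directionMoment g).trace = 1 := by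
  have hone : (fun τ : ι → ℝ => ∑ i, τ i * τ i / (τ ⬝ᵥ τ)) =ᵐ[g] fun _ => 1 := by
    filter_upwards [hg] with τ hτ
    rw [← Finset.sum_div]
    exact div_self (dotProduct_self_pos_of_ne_zero hτ).ne'
  simp only [trace, diag, directionMoment, of_apply]
  rw [← integral_finsetSum _ fun i _ => integrable_mul_div_dotProduct_self g i i,
    integral_congr_ae hone, integral_const, probReal_univ, one_smul]

lemma directionMoment_mulVec_one {g : Measure (ι → ℝ)} [IsFiniteMeasure g]
    (hg : ∀ᵐ τ ∂g, ∑ i, τ i = 0) : directionMoment g *ᵥ 1 = 0 := by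
  ext i
  have hzero : (fun τ : ι → ℝ => ∑ j, τ i * τ j / (τ ⬝ᵥ τ)) =ᵐ[g] fun _ => 0 := by
    filter_upwards [hg] with τ hτ
    rw [← Finset.sum_div, ← Finset.mul_sum, hτ, mul_zero, zero_div]
  change ∑ j, directionMoment g i j * 1 = 0
  simp only [mul_one, directionMoment, of_apply]
  rw [← integral_finsetSum _ fun j _ => integrable_mul_div_dotProduct_self g i j,
    integral_congr_ae hzero, integral_zero]

end Moments

section CompletelySymmetric

lemma exists_eq_smul_one_add_smul_of_forall_submatrix_eq {ι R : Type*} [DecidableEq ι] [Ring R]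
    {M : Matrix ι ι R} (hM : ∀ σ : Equiv.Perm ι, M.submatrix σ σ = M) :
    ∃ a b : R, M = a • (1 : Matrix ι ι R) + b • Matrix.of fun _ _ => 1 := by
  have hperm (σ : Equiv.Perm ι) (i j : ι) : M (σ i) (σ j) = M i j := congr_fun₂ (hM σ) i j
  obtain _ | _ := subsingleton_or_nontrivial ι
  · obtain _ | ⟨⟨i⟩⟩ := isEmpty_or_nonempty ι
    · exact ⟨0, 0, Subsingleton.elim _ _⟩
    · refine ⟨M i i, 0, ?_⟩
      ext k l
      simp [Subsingleton.elim k i, Subsingleton.elim l i]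
  · obtain ⟨i, j, hij⟩ := exists_pair_ne ι
    have htrans {k l : ι} (hkl : k ≠ l) : ∃ σ : Equiv.Perm ι, σ i = k ∧ σ j = l :=
      MulAction.is_two_pretransitive_iff.1 (Equiv.Perm.isMultiplyPretransitive ι 2) hij hkl
    refine ⟨M i i - M i j, M i j, ?_⟩
    ext k l
    obtain rfl | hkl := eq_or_ne k l
    · simp [← hperm (Equiv.swap i k) i i]
    · obtain ⟨σ, rfl, rfl⟩ := htrans hkl
      simp [hkl, hperm]

end CompletelySymmetric

section CenteringMatrix

variable {t : ℕ}

lemma Jmat_eq_vecMulVec (m : ℕ) : Jmat m = vecMulVec 1 1 := by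
  ext
  simp [Jmat, vecMulVec_apply]

lemma Jmat_mulVec (x : Fin t → ℝ) : Jmat t *ᵥ x = (∑ i, x i) • 1 := by
  rw [Jmat_eq_vecMulVec, vecMulVec_mulVec, one_dotProduct, op_smul_eq_smul]

lemma Bmat_mulVec_of_sum_eq_zero {x : Fin t → ℝ} (hx : ∑ i, x i = 0) : Bmat t *ᵥ x = x := by
  rw [Bmat, sub_mulVec, one_mulVec, smul_mulVec, Jmat_mulVec, hx, zero_smul, smul_zero, sub_zero]

lemma Bmat_mulVec_one : Bmat t *ᵥ 1 = 0 := by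
  rw [Bmat, sub_mulVec, one_mulVec, smul_mulVec, Jmat_mulVec, smul_smul]
  obtain rfl | ht := t.eq_zero_or_pos
  · exact Subsingleton.elim _ _
  · simp [ht.ne']

lemma Bmat_transpose : (Bmat t)ᵀ = Bmat t := by
  rw [Bmat, transpose_sub, transpose_one, transpose_smul]
  rfl

lemma Bmat_submatrix (σ : Equiv.Perm (Fin t)) : (Bmat t).submatrix σ σ = Bmat t := by
  rw [Bmat, submatrix_sub, submatrix_smul, Pi.sub_apply, Pi.sub_apply, submatrix_one_equiv]
  rfl

lemma trace_Bmat (ht : t ≠ 0) : (Bmat t).trace = t - 1 := by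
  have hJ : (Jmat t).trace = t := by simp [Jmat, trace]
  rw [Bmat, trace_sub, trace_one, trace_smul, hJ, smul_eq_mul, Fintype.card_fin,
    inv_mul_cancel₀ (Nat.cast_ne_zero.2 ht)]

lemma mul_Bmat_of_mulVec_one_eq_zero {m : Type*} {M : Matrix m (Fin t) ℝ} (hM : M *ᵥ 1 = 0) :
    M * Bmat t = M := by
  rw [Bmat, Matrix.mul_sub, Matrix.mul_one, Matrix.mul_smul, Jmat_eq_vecMulVec,
    mul_vecMulVec, hM, zero_vecMulVec, smul_zero, sub_zero]

lemma eq_smul_Bmat_of_mulVec_one_eq_zero {M : Matrix (Fin t) (Fin t) ℝ}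
    (hM : ∃ a b : ℝ, M = a • (1 : Matrix (Fin t) (Fin t) ℝ) + b • Jmat t) (h1 : M *ᵥ 1 = 0) :
    M = (M.trace / (t - 1)) • Bmat t := by
  obtain ⟨a, b, hab⟩ := hM
  have hJB : Jmat t * Bmat t = 0 := by
    rw [← Bmat_transpose, ← transpose_transpose (Jmat t), ← transpose_mul,
      show (Jmat t)ᵀ = Jmat t from rfl, Jmat_eq_vecMulVec, mul_vecMulVec, Bmat_mulVec_one,
      zero_vecMulVec, transpose_zero]
  have hMB : M = a • Bmat t := by
    rw [← mul_Bmat_of_mulVec_one_eq_zero h1, hab, add_mul, smul_mul, smul_mul, one_mul, hJB,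
      smul_zero, add_zero]
  obtain rfl | ht := eq_or_ne t 0
  · exact Subsingleton.elim _ _
  obtain rfl | ht1 := eq_or_ne t 1
  · have hB : Bmat 1 = 0 := by
      ext i j
      simp [Bmat, Jmat, Subsingleton.elim i j]
    rw [hMB, hB, smul_zero, smul_zero]
  · have ht1' : (t : ℝ) - 1 ≠ 0 := sub_ne_zero.2 (Nat.cast_ne_one.2 ht1)
    rw [hMB, trace_smul, trace_Bmat ht, smul_eq_mul, mul_div_cancel_right₀ _ ht1']

end CenteringMatrix

section WeightedCentering

variable {p : ℕ} {S : Matrix (Fin p) (Fin p) ℝ}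

-- `B̃ = Pᵀ Σ⁻¹ P`, where `P` is the `Σ⁻¹`-orthogonal projection along the constant vectors.
lemma Btil_posSemidef (hS : S.PosDef) : (Btil S).PosSemidef := by
  set a : ℝ := 1 ⬝ᵥ (S⁻¹ *ᵥ 1) with ha
  set P : Matrix (Fin p) (Fin p) ℝ := 1 - a⁻¹ • (Jmat p * S⁻¹) with hP
  have hPt : Pᴴ = 1 - a⁻¹ • (S⁻¹ * Jmat p) := by
    rw [hP, conjTranspose_sub, conjTranspose_one, conjTranspose_smul, conjTranspose_mul,
      hS.inv.isHermitian.eq, star_trivial, conjTranspose_eq_transpose_of_trivial]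
    rfl
  have hJJ : Jmat p * S⁻¹ * Jmat p = a • Jmat p := by
    rw [mul_assoc, Jmat_eq_vecMulVec, mul_vecMulVec, vecMulVec_mul_vecMulVec, ← ha,
      vecMulVec_smul]
  have hcube : S⁻¹ * Jmat p * S⁻¹ * (Jmat p * S⁻¹) = a • (S⁻¹ * Jmat p * S⁻¹) :=
    calc S⁻¹ * Jmat p * S⁻¹ * (Jmat p * S⁻¹) = S⁻¹ * (Jmat p * S⁻¹ * Jmat p) * S⁻¹ := by
          simp only [mul_assoc]
      _ = a • (S⁻¹ * Jmat p * S⁻¹) := by rw [hJJ, Matrix.mul_smul, smul_mul]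
  have hfactor : Btil S = Pᴴ * S⁻¹ * P := by
    have hinv : a⁻¹ * a⁻¹ * a = a⁻¹ := by
      obtain h0 | h0 := eq_or_ne a 0 <;> simp [h0]
    have hB : Btil S = S⁻¹ - a⁻¹ • (S⁻¹ * Jmat p * S⁻¹) := rfl
    rw [hPt, hP, sub_mul, one_mul, smul_mul, mul_sub, mul_one, sub_mul, Matrix.mul_smul, smul_mul,
      Matrix.mul_smul, hcube, smul_smul, smul_smul, hinv,
      ← mul_assoc, sub_self, sub_zero, hB]
  rw [hfactor]
  exact hS.inv.posSemidef.conjTranspose_mul_mul_same P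

lemma Btil_transpose (hS : S.PosDef) : (Btil S)ᵀ = Btil S :=
  (Btil_posSemidef hS).isHermitian

end WeightedCentering

section InformationMatrices

variable {p t : ℕ} {n : ℕ} {S : Matrix (Fin p) (Fin p) ℝ} {w : TrtSeq p t → ℝ}

lemma Chat_transpose (hS : S.PosDef) (s : TrtSeq p t) (i j : Fin 2) :
    (Chat S s i j)ᵀ = Chat S s j i := by
  simp only [Chat, transpose_mul, transpose_transpose, Btil_transpose hS, Bmat_transpose,
    Matrix.mul_assoc]

lemma ChatD_transpose (hS : S.PosDef) (i j : Fin 2) :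
    (ChatD n S w i j)ᵀ = ChatD n S w j i := by
  simp only [ChatD, transpose_smul, transpose_sum, Chat_transpose hS]

lemma CD_transpose (hS : S.PosDef) (i j : Fin 2) : (CD n S w i j)ᵀ = CD n S w j i := by
  rw [CD, CD, transpose_sub, ChatD_transpose hS, transpose_smul, transpose_mul, transpose_mul,
    transpose_transpose, Btil_transpose hS, Matrix.mul_assoc]

lemma dotProduct_CD_mulVec_self_comm (hS : S.PosDef) (i j : Fin 2) (l : Fin t → ℝ) :
    l ⬝ᵥ (CD n S w i j *ᵥ l) = l ⬝ᵥ (CD n S w j i *ᵥ l) := by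
  rw [← CD_transpose hS, dotProduct_transpose_mulVec]

lemma ChatD_mulVec_one (i j : Fin 2) : ChatD n S w i j *ᵥ 1 = 0 := by
  simp only [ChatD, Chat, smul_mulVec, sum_mulVec, ← mulVec_mulVec, Bmat_mulVec_one, mulVec_zero,
    smul_zero, Finset.sum_const_zero]

lemma cD_eq_sum (n : ℕ) (S : Matrix (Fin p) (Fin p) ℝ) (w : TrtSeq p t → ℝ) (i j : Fin 2) :
    cD n S w i j = n * ∑ s, w s * cseq S s i j := by
  simp only [cD, ChatD, trace_smul, trace_sum, smul_eq_mul, cseq]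

lemma natCast_pos_of_cD_ne_zero {i j : Fin 2} (hc : cD n S w i j ≠ 0) : 0 < (n : ℝ) := by
  refine Nat.cast_pos.2 (Nat.pos_of_ne_zero ?_)
  rintro rfl
  exact hc (by rw [cD_eq_sum, Nat.cast_zero, zero_mul])

lemma natCast_sub_one_pos_of_cD_ne_zero {i j : Fin 2} (hc : cD n S w i j ≠ 0) :
    0 < (t : ℝ) - 1 := by
  refine sub_pos.2 (Nat.one_lt_cast.2 ?_)
  by_contra! ht
  have : Subsingleton (Fin t) := Fin.subsingleton_iff_le_one.2 ht
  have hzero : ChatD n S w i j = 0 := by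
    ext k l
    have hk := congr_fun (ChatD_mulVec_one (n := n) (S := S) (w := w) i j) k
    simpa [mulVec, dotProduct, Fintype.sum_subsingleton _ l] using hk
  exact hc (by rw [cD, hzero, trace_zero])

lemma cD_comm (hS : S.PosDef) (i j : Fin 2) : cD n S w i j = cD n S w j i := by
  rw [cD, ← trace_transpose, ChatD_transpose hS, cD]

/-- The quadratic matrix pencil `C₁₁ + x (C₁₂ + C₂₁) + x² C₂₂` of a family of four blocks. Indices
are shifted to `0, 1` as in `CD` and `ChatD`. -/
def blockPencil (C : Fin 2 → Fin 2 → Matrix (Fin t) (Fin t) ℝ) (x : ℝ) :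
    Matrix (Fin t) (Fin t) ℝ :=
  C 0 0 + x • (C 0 1 + C 1 0) + x ^ 2 • C 1 1

lemma dotProduct_blockPencil_mulVec (C : Fin 2 → Fin 2 → Matrix (Fin t) (Fin t) ℝ) (x : ℝ)
    (l : Fin t → ℝ) :
    l ⬝ᵥ (blockPencil C x *ᵥ l) =
      l ⬝ᵥ (C 0 0 *ᵥ l) + x * (l ⬝ᵥ (C 0 1 *ᵥ l) + l ⬝ᵥ (C 1 0 *ᵥ l)) +
        x ^ 2 * (l ⬝ᵥ (C 1 1 *ᵥ l)) := by
  simp only [blockPencil, add_mulVec, smul_mulVec, dotProduct_add, dotProduct_smul, smul_eq_mul]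

lemma natCast_mul_qD (x : ℝ) :
    n * qD S w x = cD n S w 0 0 + 2 * x * cD n S w 0 1 + x ^ 2 * cD n S w 1 1 := by
  simp only [qD, qSeq, cD_eq_sum, Finset.mul_sum, ← Finset.sum_add_distrib]
  exact Finset.sum_congr rfl fun s _ => by ring

lemma natCast_mul_qD_eq_add_sq (hc : cD n S w 1 1 ≠ 0) (x : ℝ) :
    n * qD S w x = n * qD S w (xD n S w) + cD n S w 1 1 * (x - xD n S w) ^ 2 := by
  rw [natCast_mul_qD, natCast_mul_qD, xD]
  field_simp
  ring

lemma trace_blockPencil_ChatD (hS : S.PosDef) (x : ℝ) :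
    (blockPencil (ChatD n S w) x).trace = n * qD S w x := by
  have htrace (i j : Fin 2) : (ChatD n S w i j).trace = cD n S w i j := rfl
  simp only [blockPencil, trace_add, trace_smul, htrace, cD_comm hS 1 0, natCast_mul_qD,
    smul_eq_mul]
  ring

lemma blockPencil_ChatD_mulVec_one (x : ℝ) : blockPencil (ChatD n S w) x *ᵥ 1 = 0 := by
  simp only [blockPencil, add_mulVec, smul_mulVec, ChatD_mulVec_one, add_zero, smul_zero]

lemma dotProduct_blockPencil_CD_le (hS : S.PosDef) (x : ℝ) (l : Fin t → ℝ) :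
    l ⬝ᵥ (blockPencil (CD n S w) x *ᵥ l) ≤ l ⬝ᵥ (blockPencil (ChatD n S w) x *ᵥ l) := by
  set u : Fin 2 → Fin p → ℝ := fun i => (∑ s, w s • (Gmat i s * Bmat t)) *ᵥ l
  have hblock (i j : Fin 2) :
      l ⬝ᵥ (CD n S w i j *ᵥ l) = l ⬝ᵥ (ChatD n S w i j *ᵥ l) - n * (u i ⬝ᵥ (Btil S *ᵥ u j)) := by
    rw [CD, sub_mulVec, dotProduct_sub, smul_mulVec, dotProduct_smul, smul_eq_mul,
      ← mulVec_mulVec, ← mulVec_mulVec, dotProduct_transpose_mulVec, dotProduct_comm (u i)]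
  have hsq : 0 ≤ (u 0 + x • u 1) ⬝ᵥ (Btil S *ᵥ (u 0 + x • u 1)) := by
    simpa using (Btil_posSemidef hS).dotProduct_mulVec_nonneg (u 0 + x • u 1)
  have hexpand : (u 0 + x • u 1) ⬝ᵥ (Btil S *ᵥ (u 0 + x • u 1)) =
      u 0 ⬝ᵥ (Btil S *ᵥ u 0) + x * (u 0 ⬝ᵥ (Btil S *ᵥ u 1) + u 1 ⬝ᵥ (Btil S *ᵥ u 0)) +
        x ^ 2 * (u 1 ⬝ᵥ (Btil S *ᵥ u 1)) := by
    simp only [mulVec_add, mulVec_smul, add_dotProduct, dotProduct_add, smul_dotProduct,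
      dotProduct_smul, smul_eq_mul]
    ring
  have hn := mul_nonneg n.cast_nonneg (hexpand ▸ hsq)
  simp only [dotProduct_blockPencil_mulVec, hblock]
  linarith

end InformationMatrices

section FisherInformation

lemma sub_sq_div_le {c : ℝ} (hc : 0 < c) (a b x : ℝ) :
    a - b ^ 2 / c ≤ a + x * (b + b) + x ^ 2 * c := by
  have hsq : 0 ≤ (b + x * c) ^ 2 / c := by positivity
  have hcomplete : a + x * (b + b) + x ^ 2 * c = a - b ^ 2 / c + (b + x * c) ^ 2 / c := by
    field_simp
    ring
  linarith

variable {p t : ℕ} {n : ℕ} {S : Matrix (Fin p) (Fin p) ℝ} {w : TrtSeq p t → ℝ}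

lemma dotProduct_CInfo_mulVec (n : ℕ) (S : Matrix (Fin p) (Fin p) ℝ) (w : TrtSeq p t → ℝ)
    (τ : Fin t → ℝ) (l0 : ℝ) (l : Fin t → ℝ) :
    l ⬝ᵥ (CInfo n S w τ l0 *ᵥ l) = l ⬝ᵥ (blockPencil (CD n S w) l0 *ᵥ l) -
      (l ⬝ᵥ ((CD n S w 0 1 + l0 • CD n S w 1 1) *ᵥ τ)) *
        (τ ⬝ᵥ ((CD n S w 1 0 + l0 • CD n S w 1 1) *ᵥ l)) / (τ ⬝ᵥ (CD n S w 1 1 *ᵥ τ)) := by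
  rw [CInfo, sub_mulVec, dotProduct_sub, smul_mulVec, dotProduct_smul, ← mulVec_mulVec,
    ← mulVec_mulVec, vecMulVec_mulVec, op_smul_eq_smul, mulVec_smul, dotProduct_smul, smul_eq_mul,
    smul_eq_mul, blockPencil]
  ring

lemma dotProduct_CInfo_mulVec_self (hS : S.PosDef) {τ : Fin t → ℝ} (l0 : ℝ)
    (hτ : τ ⬝ᵥ (CD n S w 1 1 *ᵥ τ) ≠ 0) :
    τ ⬝ᵥ (CInfo n S w τ l0 *ᵥ τ) = τ ⬝ᵥ (CD n S w 0 0 *ᵥ τ) -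
      (τ ⬝ᵥ (CD n S w 0 1 *ᵥ τ)) ^ 2 / (τ ⬝ᵥ (CD n S w 1 1 *ᵥ τ)) := by
  rw [dotProduct_CInfo_mulVec, dotProduct_blockPencil_mulVec]
  simp only [add_mulVec, smul_mulVec, dotProduct_add, dotProduct_smul, smul_eq_mul,
    dotProduct_CD_mulVec_self_comm hS 1 0]
  field_simp
  ring

lemma dotProduct_CInfo_mulVec_self_le (hS : S.PosDef) {τ : Fin t → ℝ} (l0 : ℝ)
    (hτ : 0 < τ ⬝ᵥ (CD n S w 1 1 *ᵥ τ)) (x : ℝ) :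
    τ ⬝ᵥ (CInfo n S w τ l0 *ᵥ τ) ≤ τ ⬝ᵥ (blockPencil (ChatD n S w) x *ᵥ τ) := by
  refine le_trans ?_ (dotProduct_blockPencil_CD_le hS x τ)
  rw [dotProduct_CInfo_mulVec_self hS l0 hτ.ne', dotProduct_blockPencil_mulVec,
    dotProduct_CD_mulVec_self_comm hS 1 0]
  exact sub_sq_div_le hτ _ _ x

lemma mD_le (hS : S.PosDef) {τ : Fin t → ℝ} (hτ : ∑ i, τ i = 0) (hτ0 : τ ≠ 0)
    (hc : 0 < τ ⬝ᵥ (CD n S w 1 1 *ᵥ τ)) (l0 x : ℝ) :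
    mD n S w l0 τ ≤ τ ⬝ᵥ (blockPencil (ChatD n S w) x *ᵥ τ) / (τ ⬝ᵥ τ) := by
  refine (centeredMin_le (CInfo n S w τ l0) hτ hτ0).trans ?_
  have hpos := dotProduct_self_pos_of_ne_zero hτ0
  gcongr
  exact dotProduct_CInfo_mulVec_self_le hS l0 hc x

end FisherInformation

section Relabelling

variable {p t : ℕ} {S : Matrix (Fin p) (Fin p) ℝ}

lemma Gmat_permSeq_submatrix (σ : Equiv.Perm (Fin t)) (i : Fin 2) (s : TrtSeq p t) :
    (Gmat i (permSeq σ s)).submatrix id σ = Gmat i s := by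
  ext k j
  fin_cases i <;> simp [Gmat, Tmat, Fmat, permSeq]

lemma Chat_permSeq_submatrix (σ : Equiv.Perm (Fin t)) (s : TrtSeq p t) (i j : Fin 2) :
    (Chat S (permSeq σ s) i j).submatrix σ σ = Chat S s i j := by
  rw [Chat, submatrix_mul _ _ σ σ σ σ.bijective, submatrix_mul _ _ σ id σ Function.bijective_id,
    submatrix_mul _ _ σ id id Function.bijective_id, submatrix_mul _ _ σ σ id σ.bijective,
    ← transpose_submatrix, Gmat_permSeq_submatrix, Gmat_permSeq_submatrix, Bmat_submatrix,
    submatrix_id_id, Chat]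

lemma cseq_permSeq (σ : Equiv.Perm (Fin t)) (s : TrtSeq p t) (i j : Fin 2) :
    cseq S (permSeq σ s) i j = cseq S s i j := by
  rw [cseq, cseq, ← Chat_permSeq_submatrix σ s]
  exact (Equiv.sum_comp σ fun k => Chat S (permSeq σ s) i j k k).symm

lemma qSeq_permSeq (σ : Equiv.Perm (Fin t)) (s : TrtSeq p t) (x : ℝ) :
    qSeq S (permSeq σ s) x = qSeq S s x := by
  simp only [qSeq, cseq_permSeq]

lemma sum_comp_permSeq {M : Type*} [AddCommMonoid M] (σ : Equiv.Perm (Fin t))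
    (f : TrtSeq p t → M) : ∑ s, f (permSeq σ s) = ∑ s, f s :=
  Equiv.sum_comp (Equiv.arrowCongr (Equiv.refl (Fin p)) σ) f

lemma ChatD_submatrix {w : TrtSeq p t → ℝ} (hw : IsSymmetricDesign w) (n : ℕ)
    (σ : Equiv.Perm (Fin t)) (i j : Fin 2) :
    (ChatD n S w i j).submatrix σ σ = ChatD n S w i j := by
  have hsum : (∑ s, w s • Chat S s i j).submatrix σ σ = ∑ s, w s • Chat S s i j :=
    calc (∑ s, w s • Chat S s i j).submatrix σ σ
        = (∑ s, w (permSeq σ s) • Chat S (permSeq σ s) i j).submatrix σ σ := by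
          rw [sum_comp_permSeq σ fun s => w s • Chat S s i j]
      _ = ∑ s, w s • (Chat S (permSeq σ s) i j).submatrix σ σ := by
          ext k l
          simp only [submatrix_apply, Matrix.sum_apply, Matrix.smul_apply, hw σ]
      _ = ∑ s, w s • Chat S s i j := by simp only [Chat_permSeq_submatrix]
  rw [ChatD, submatrix_smul, Pi.smul_apply, Pi.smul_apply, hsum]

end Relabelling

section UniformDesigns

variable {p t : ℕ} {n : ℕ} {S : Matrix (Fin p) (Fin p) ℝ} {w : TrtSeq p t → ℝ}

/-- A design is uniform on the periods if each treatment has weight `1 / t` in each period. -/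
def IsUniformOnPeriods (w : TrtSeq p t → ℝ) : Prop :=
  ∀ (k : Fin p) (i : Fin t), ∑ s with s k = i, w s = 1 / (t : ℝ)

lemma exists_sum_smul_Gmat_eq_vecMulVec (hw : IsUniformOnPeriods w) (i : Fin 2) :
    ∃ r : Fin p → ℝ, ∑ s, w s • Gmat i s = vecMulVec r 1 := by
  obtain rfl | rfl : i = 0 ∨ i = 1 := by fin_omega
  · refine ⟨fun _ => 1 / t, ?_⟩
    ext k j
    simpa [Gmat, Tmat, Matrix.sum_apply, vecMulVec_apply, Finset.sum_filter] using hw k j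
  · refine ⟨fun k => if (k : ℕ) = 0 then 0 else 1 / t, ?_⟩
    ext k j
    obtain hk | hk := eq_or_ne (k : ℕ) 0
    · simp [Gmat, Fmat, Matrix.sum_apply, vecMulVec_apply, hk]
    · simpa [Gmat, Fmat, Matrix.sum_apply, vecMulVec_apply, hk, Finset.sum_filter] using hw _ j

lemma sum_smul_Gmat_mul_Bmat_eq_zero (hw : IsUniformOnPeriods w) (i : Fin 2) :
    ∑ s, w s • (Gmat i s * Bmat t) = 0 := by
  obtain ⟨r, hr⟩ := exists_sum_smul_Gmat_eq_vecMulVec hw i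
  simp only [← Matrix.smul_mul, ← Matrix.sum_mul, hr]
  rw [vecMulVec_mul, ← mulVec_transpose, Bmat_transpose, Bmat_mulVec_one]
  ext k
  exact mul_zero (r k)

lemma CD_eq_ChatD (hw : IsUniformOnPeriods w) (i j : Fin 2) : CD n S w i j = ChatD n S w i j := by
  rw [CD, sum_smul_Gmat_mul_Bmat_eq_zero hw, sum_smul_Gmat_mul_Bmat_eq_zero hw, Matrix.mul_zero,
    smul_zero, sub_zero]

lemma CD_eq_smul_Bmat (hw : IsPseudoSymmetric n S w) (i j : Fin 2) :
    CD n S w i j = (cD n S w i j / (t - 1)) • Bmat t := by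
  obtain ⟨hunif, hcs⟩ := hw
  have hCD : CD n S w i j = ChatD n S w i j := CD_eq_ChatD hunif i j
  rw [eq_smul_Bmat_of_mulVec_one_eq_zero (hcs i j) (hCD ▸ ChatD_mulVec_one i j), hCD, cD]

lemma isPseudoSymmetric_add_smul {v : TrtSeq p t → ℝ} (hw : IsPseudoSymmetric n S w)
    (hv : IsPseudoSymmetric n S v) {a b : ℝ} (hab : a + b = 1) :
    IsPseudoSymmetric n S (a • w + b • v) := by
  have hunif : IsUniformOnPeriods (a • w + b • v) := fun k i => by
    simp only [Pi.add_apply, Pi.smul_apply, smul_eq_mul, Finset.sum_add_distrib,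
      ← Finset.mul_sum, hw.1 k i, hv.1 k i, ← add_mul, hab, one_mul]
  refine ⟨hunif, fun i j => ?_⟩
  obtain ⟨a₁, b₁, h₁⟩ := hw.2 i j
  obtain ⟨a₂, b₂, h₂⟩ := hv.2 i j
  refine ⟨a * a₁ + b * a₂, a * b₁ + b * b₂, ?_⟩
  have hlin : ChatD n S (a • w + b • v) i j = a • ChatD n S w i j + b • ChatD n S v i j := by
    simp only [ChatD, Pi.add_apply, Pi.smul_apply, smul_eq_mul, add_smul, mul_smul,
      Finset.sum_add_distrib, ← Finset.smul_sum, smul_add]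
    rw [smul_comm (n : ℝ) a, smul_comm (n : ℝ) b]
  rw [CD_eq_ChatD hunif, hlin, ← CD_eq_ChatD hw.1, ← CD_eq_ChatD hv.1, h₁, h₂]
  module

end UniformDesigns

section Symmetrization

variable {p t : ℕ} {n : ℕ} {S : Matrix (Fin p) (Fin p) ℝ} {w : TrtSeq p t → ℝ}

lemma sum_filter_eq_of_isSymmetricDesign (hw : IsSymmetricDesign w) (k : Fin p) (i j : Fin t) :
    ∑ s with s k = i, w s = ∑ s with s k = j, w s := by
  have hσ : ∀ s : TrtSeq p t, permSeq (Equiv.swap i j) s k = j ↔ s k = i := fun s => by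
    rw [permSeq, Equiv.swap_apply_eq_iff, Equiv.swap_apply_right]
  rw [Finset.sum_filter, Finset.sum_filter,
    ← sum_comp_permSeq (Equiv.swap i j) fun s => if s k = j then w s else 0]
  simp only [hσ, hw (Equiv.swap i j)]

lemma isUniformOnPeriods_of_isSymmetricDesign (hw : IsDesign w) (hsymm : IsSymmetricDesign w) :
    IsUniformOnPeriods w := by
  intro k i
  have htotal : (t : ℝ) * ∑ s with s k = i, w s = 1 :=
    calc (t : ℝ) * ∑ s with s k = i, w s = ∑ j : Fin t, ∑ s with s k = j, w s := by
          simp only [sum_filter_eq_of_isSymmetricDesign hsymm k _ i, Finset.sum_const,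
            Finset.card_univ, Fintype.card_fin, nsmul_eq_mul]
      _ = 1 := by rw [Finset.sum_fiberwise, hw.2]
  exact eq_one_div_of_mul_eq_one_right htotal

lemma isPseudoSymmetric_of_isSymmetricDesign (hw : IsDesign w) (hsymm : IsSymmetricDesign w) :
    IsPseudoSymmetric n S w := by
  have hunif := isUniformOnPeriods_of_isSymmetricDesign hw hsymm
  refine ⟨hunif, fun i j => ?_⟩
  rw [CD_eq_ChatD hunif]
  exact exists_eq_smul_one_add_smul_of_forall_submatrix_eq fun σ => ChatD_submatrix hsymm n σ i j

lemma permSeq_mul (σ ρ : Equiv.Perm (Fin t)) (s : TrtSeq p t) :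
    permSeq (σ * ρ) s = permSeq σ (permSeq ρ s) := rfl

lemma isSymmetricDesign_symmetrize (w : TrtSeq p t → ℝ) : IsSymmetricDesign (symmetrize w) := by
  intro σ s
  simp only [symmetrize, permDesign, ← permSeq_mul]
  congr 1
  exact Fintype.sum_equiv (Equiv.mulLeft σ⁻¹) _ _ fun ρ => by simp [_root_.mul_inv_rev]

lemma sum_symmetrize_mul {f : TrtSeq p t → ℝ} (hf : ∀ σ s, f (permSeq σ s) = f s) :
    ∑ s, symmetrize w s * f s = ∑ s, w s * f s := by
  have hperm (σ : Equiv.Perm (Fin t)) : ∑ s, permDesign σ w s * f s = ∑ s, w s * f s := by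
    rw [← sum_comp_permSeq σ⁻¹ fun s => w s * f s]
    simp only [permDesign, hf]
  have hfact : (t.factorial : ℝ) ≠ 0 := Nat.cast_ne_zero.2 t.factorial_ne_zero
  simp only [symmetrize, mul_assoc, Finset.sum_mul, ← Finset.mul_sum]
  rw [Finset.sum_comm]
  simp only [hperm, Finset.sum_const, Finset.card_univ, Fintype.card_perm, Fintype.card_fin,
    nsmul_eq_mul]
  exact inv_mul_cancel_left₀ hfact _

lemma isDesign_symmetrize (hw : IsDesign w) : IsDesign (symmetrize w) := by
  refine ⟨fun s => mul_nonneg (by positivity) (Finset.sum_nonneg fun σ _ => hw.1 _), ?_⟩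
  simpa [hw.2] using sum_symmetrize_mul (w := w) (f := fun _ => 1) fun _ _ => rfl

lemma qD_symmetrize (x : ℝ) : qD S (symmetrize w) x = qD S w x :=
  sum_symmetrize_mul fun σ s => qSeq_permSeq σ s x

lemma qD_single (s : TrtSeq p t) (x : ℝ) : qD S (Pi.single s 1) x = qSeq S s x := by
  simp [qD, Pi.single_apply]

lemma isPseudoSymmetric_symmetrize (hw : IsDesign w) :
    IsPseudoSymmetric n S (symmetrize w) :=
  isPseudoSymmetric_of_isSymmetricDesign (isDesign_symmetrize hw) (isSymmetricDesign_symmetrize w)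

end Symmetrization

section Criterion

variable {p t : ℕ} {n : ℕ} {S : Matrix (Fin p) (Fin p) ℝ} {w : TrtSeq p t → ℝ} {l0 : ℝ}
  {g : Measure (Fin t → ℝ)}

lemma ae_sum_eq_zero_and_ne_zero (hg : IsExchangeablePrior g) :
    ∀ᵐ τ ∂g, ∑ i, τ i = 0 ∧ τ ≠ 0 :=
  ae_iff.2 hg.2.1

lemma directionMoment_eq_smul_Bmat (hg : IsExchangeablePrior g) :
    directionMoment g = (1 / ((t : ℝ) - 1)) • Bmat t := by
  have : IsProbabilityMeasure g := hg.1
  have hae := ae_sum_eq_zero_and_ne_zero hg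
  have hinv := exists_eq_smul_one_add_smul_of_forall_submatrix_eq fun σ =>
    directionMoment_submatrix (hg.2.2 σ)
  have hone := directionMoment_mulVec_one (hae.mono fun _ h => h.1)
  rw [eq_smul_Bmat_of_mulVec_one_eq_zero hinv hone,
    trace_directionMoment (hae.mono fun _ h => h.2)]

lemma integral_rayleigh_of_mulVec_one_eq_zero (hg : IsExchangeablePrior g)
    {M : Matrix (Fin t) (Fin t) ℝ} (hM : M *ᵥ 1 = 0) :
    ∫ τ, τ ⬝ᵥ (M *ᵥ τ) / (τ ⬝ᵥ τ) ∂g = M.trace / (t - 1) := by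
  have : IsProbabilityMeasure g := hg.1
  rw [integral_rayleigh, directionMoment_eq_smul_Bmat hg, Matrix.mul_smul,
    mul_Bmat_of_mulVec_one_eq_zero hM, trace_smul, smul_eq_mul, one_div_mul_eq_div]

lemma Ecrit_le (hS : S.PosDef) (hg : IsExchangeablePrior g) (hw : EAdmissible n S g l0 w)
    (x : ℝ) : Ecrit n S g l0 w ≤ n * qD S w x / (t - 1) := by
  have : IsProbabilityMeasure g := hg.1
  rw [← trace_blockPencil_ChatD hS,
    ← integral_rayleigh_of_mulVec_one_eq_zero hg (blockPencil_ChatD_mulVec_one x)]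
  refine integral_mono_ae hw.2.2 (integrable_rayleigh g _) ?_
  filter_upwards [ae_sum_eq_zero_and_ne_zero hg, hw.2.1] with τ hτ hc
  exact mD_le hS hτ.1 hτ.2 hc l0 x

lemma dotProduct_CD_mulVec (hps : IsPseudoSymmetric n S w) (i j : Fin 2) (l : Fin t → ℝ)
    {τ : Fin t → ℝ} (hτ : ∑ i, τ i = 0) :
    l ⬝ᵥ (CD n S w i j *ᵥ τ) = cD n S w i j / (t - 1) * (l ⬝ᵥ τ) := by
  rw [CD_eq_smul_Bmat hps, smul_mulVec, Bmat_mulVec_of_sum_eq_zero hτ, dotProduct_smul,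
    smul_eq_mul]

lemma dotProduct_CD_mulVec_pos (hps : IsPseudoSymmetric n S w) (hc : 0 < cD n S w 1 1)
    {τ : Fin t → ℝ} (hτ : ∑ i, τ i = 0) (hτ0 : τ ≠ 0) :
    0 < τ ⬝ᵥ (CD n S w 1 1 *ᵥ τ) := by
  have ht := natCast_sub_one_pos_of_cD_ne_zero hc.ne'
  have hpos := dotProduct_self_pos_of_ne_zero hτ0
  rw [dotProduct_CD_mulVec hps 1 1 τ hτ]
  positivity

lemma dotProduct_CD_add_smul_mulVec (hps : IsPseudoSymmetric n S w) (i j : Fin 2) (l0 : ℝ)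
    (l : Fin t → ℝ) {τ : Fin t → ℝ} (hτ : ∑ i, τ i = 0) :
    l ⬝ᵥ ((CD n S w i j + l0 • CD n S w 1 1) *ᵥ τ) =
      (cD n S w i j + l0 * cD n S w 1 1) / (t - 1) * (l ⬝ᵥ τ) := by
  rw [add_mulVec, smul_mulVec, dotProduct_add, dotProduct_smul, smul_eq_mul,
    dotProduct_CD_mulVec hps i j l hτ, dotProduct_CD_mulVec hps 1 1 l hτ]
  ring

lemma dotProduct_CInfo_mulVec_of_isPseudoSymmetric (hS : S.PosDef) (hps : IsPseudoSymmetric n S w)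
    (hc : 0 < cD n S w 1 1) {τ : Fin t → ℝ} (hτ : ∑ i, τ i = 0) (hτ0 : τ ≠ 0) (l0 : ℝ)
    {l : Fin t → ℝ} (hl : ∑ i, l i = 0) :
    l ⬝ᵥ (CInfo n S w τ l0 *ᵥ l) = n * qD S w (xD n S w) / (t - 1) * (l ⬝ᵥ l) +
      cD n S w 1 1 * (l0 - xD n S w) ^ 2 / (t - 1) * (l ⬝ᵥ l - (l ⬝ᵥ τ) ^ 2 / (τ ⬝ᵥ τ)) := by
  have ht := (natCast_sub_one_pos_of_cD_ne_zero hc.ne').ne'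
  have hpos := (dotProduct_self_pos_of_ne_zero hτ0).ne'
  have hshift : cD n S w 0 1 + l0 * cD n S w 1 1 = cD n S w 1 1 * (l0 - xD n S w) := by
    rw [xD]
    field_simp
    ring
  have hpencil : l ⬝ᵥ (blockPencil (CD n S w) l0 *ᵥ l) = n * qD S w l0 / (t - 1) * (l ⬝ᵥ l) := by
    rw [dotProduct_blockPencil_mulVec, natCast_mul_qD]
    simp only [dotProduct_CD_mulVec hps _ _ l hl, cD_comm hS 1 0]
    ring
  rw [dotProduct_CInfo_mulVec, hpencil, dotProduct_CD_add_smul_mulVec hps 0 1 l0 l hτ,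
    dotProduct_CD_add_smul_mulVec hps 1 0 l0 τ hl, dotProduct_CD_mulVec hps 1 1 τ hτ,
    cD_comm hS 1 0, hshift, dotProduct_comm τ l,
    natCast_mul_qD_eq_add_sq hc.ne' l0]
  field_simp
  ring

lemma mD_eq (hS : S.PosDef) (hps : IsPseudoSymmetric n S w) (hc : 0 < cD n S w 1 1)
    {τ : Fin t → ℝ} (hτ : ∑ i, τ i = 0) (hτ0 : τ ≠ 0) (l0 : ℝ) :
    mD n S w l0 τ = n * qD S w (xD n S w) / (t - 1) := by
  have ht := natCast_sub_one_pos_of_cD_ne_zero hc.ne'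
  have hpos := dotProduct_self_pos_of_ne_zero hτ0
  have hform {l : Fin t → ℝ} (hl : ∑ i, l i = 0) :=
    dotProduct_CInfo_mulVec_of_isPseudoSymmetric hS hps hc hτ hτ0 l0 hl
  refine centeredMin_eq_of_forall_le hτ hτ0 ?_ fun l hl => ?_
  · rw [hform hτ, sq (τ ⬝ᵥ τ), mul_div_cancel_right₀ _ hpos.ne', sub_self, mul_zero, add_zero]
  · have hcs : 0 ≤ l ⬝ᵥ l - (l ⬝ᵥ τ) ^ 2 / (τ ⬝ᵥ τ) :=
      sub_nonneg.2 ((div_le_iff₀ hpos).2 (sq_dotProduct_le l τ))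
    rw [hform hl]
    exact le_add_of_nonneg_right (by positivity)

lemma eAdmissible_of_isPseudoSymmetric (hS : S.PosDef) (hg : IsExchangeablePrior g)
    (hw : IsDesign w) (hps : IsPseudoSymmetric n S w) (hc : 0 < cD n S w 1 1) (l0 : ℝ) :
    EAdmissible n S g l0 w := by
  have : IsProbabilityMeasure g := hg.1
  have hae := ae_sum_eq_zero_and_ne_zero hg
  refine ⟨hw, hae.mono fun τ hτ => dotProduct_CD_mulVec_pos hps hc hτ.1 hτ.2, ?_⟩
  exact (integrable_const _).congr (hae.mono fun τ hτ => (mD_eq hS hps hc hτ.1 hτ.2 l0).symm)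

lemma Ecrit_eq (hS : S.PosDef) (hg : IsExchangeablePrior g) (hps : IsPseudoSymmetric n S w)
    (hc : 0 < cD n S w 1 1) (l0 : ℝ) :
    Ecrit n S g l0 w = n * qD S w (xD n S w) / (t - 1) := by
  have : IsProbabilityMeasure g := hg.1
  have hae := ae_sum_eq_zero_and_ne_zero hg
  rw [Ecrit, integral_congr_ae (hae.mono fun τ hτ => mD_eq hS hps hc hτ.1 hτ.2 l0),
    integral_const, probReal_univ, one_smul]

end Criterion

section Equivalence

open Filter Topology

variable {p t : ℕ} {n : ℕ} {S : Matrix (Fin p) (Fin p) ℝ} {w v : TrtSeq p t → ℝ} {l0 : ℝ}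
  {g : Measure (Fin t → ℝ)}

lemma qD_xD_le (hc : 0 < cD n S w 1 1) (x : ℝ) : qD S w (xD n S w) ≤ qD S w x := by
  have hn := natCast_pos_of_cD_ne_zero hc.ne'
  refine le_of_mul_le_mul_left ?_ hn
  rw [natCast_mul_qD_eq_add_sq hc.ne' x]
  exact le_add_of_nonneg_right (by positivity)

lemma qD_xD_le_of_eOptimal (hS : S.PosDef) (hg : IsExchangeablePrior g)
    (hps : IsPseudoSymmetric n S w) (hc : 0 < cD n S w 1 1) (hopt : EOptimal n S g l0 w)
    (hv : IsDesign v) (hvps : IsPseudoSymmetric n S v) (hvc : 0 < cD n S v 1 1) :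
    qD S v (xD n S v) ≤ qD S w (xD n S w) := by
  have hn := natCast_pos_of_cD_ne_zero hc.ne'
  have ht := natCast_sub_one_pos_of_cD_ne_zero hc.ne'
  have hle := hopt v (eAdmissible_of_isPseudoSymmetric hS hg hv hvps hvc l0)
  rw [Ecrit_eq hS hg hvps hvc, Ecrit_eq hS hg hps hc, div_le_div_iff_of_pos_right ht] at hle
  exact le_of_mul_le_mul_left hle hn

lemma qD_add_smul (a b : ℝ) (x : ℝ) :
    qD S (a • w + b • v) x = a * qD S w x + b * qD S v x := by
  simp only [qD, Pi.add_apply, Pi.smul_apply, smul_eq_mul, add_mul, mul_assoc,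
    Finset.sum_add_distrib, ← Finset.mul_sum]

lemma continuous_cD (n : ℕ) (S : Matrix (Fin p) (Fin p) ℝ) (i j : Fin 2) :
    Continuous fun w : TrtSeq p t → ℝ => cD n S w i j := by
  simp only [cD_eq_sum]
  fun_prop

lemma continuous_qD (S : Matrix (Fin p) (Fin p) ℝ) (w : TrtSeq p t → ℝ) :
    Continuous (qD S w) := by
  unfold qD qSeq
  fun_prop

lemma continuousAt_xD (hc : cD n S w 1 1 ≠ 0) : ContinuousAt (xD n S) w :=
  (continuous_cD n S 0 1).neg.continuousAt.div (continuous_cD n S 1 1).continuousAt hc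

lemma qD_xD_perturbed_le_of_eOptimal (hS : S.PosDef) (hg : IsExchangeablePrior g)
    (hw : IsDesign w) (hps : IsPseudoSymmetric n S w) (hc : 0 < cD n S w 1 1)
    (hopt : EOptimal n S g l0 w) (hv : IsDesign v) (hvps : IsPseudoSymmetric n S v) {e : ℝ}
    (he : 0 < e) (he1 : e ≤ 1) (hce : 0 < cD n S ((1 - e) • w + e • v) 1 1) :
    qD S v (xD n S ((1 - e) • w + e • v)) ≤ qD S w (xD n S ((1 - e) • w + e • v)) := by
  set x := xD n S ((1 - e) • w + e • v)
  have hmix : IsDesign ((1 - e) • w + e • v) :=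
    convex_stdSimplex ℝ _ hw hv (sub_nonneg.2 he1) he.le (sub_add_cancel 1 e)
  have hvalue : (1 - e) * qD S w x + e * qD S v x ≤ qD S w x :=
    calc (1 - e) * qD S w x + e * qD S v x = qD S ((1 - e) • w + e • v) x :=
          (qD_add_smul _ _ _).symm
      _ ≤ qD S w (xD n S w) := qD_xD_le_of_eOptimal hS hg hps hc hopt hmix
          (isPseudoSymmetric_add_smul hps hvps (sub_add_cancel 1 e)) hce
      _ ≤ qD S w x := qD_xD_le hc x
  refine le_of_mul_le_mul_left ?_ he
  linarith

lemma qD_le_of_eOptimal (hS : S.PosDef) (hg : IsExchangeablePrior g) (hw : IsDesign w)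
    (hps : IsPseudoSymmetric n S w) (hc : 0 < cD n S w 1 1) (hopt : EOptimal n S g l0 w)
    (hv : IsDesign v) (hvps : IsPseudoSymmetric n S v) :
    qD S v (xD n S w) ≤ qD S w (xD n S w) := by
  have hu : Tendsto (fun e : ℝ => (1 - e) • w + e • v) (𝓝[>] 0) (𝓝 w) := by
    have hcont : Continuous fun e : ℝ => (1 - e) • w + e • v := by fun_prop
    simpa using (hcont.tendsto 0).mono_left nhdsWithin_le_nhds
  have hlim (d : TrtSeq p t → ℝ) : Tendsto (fun e : ℝ => qD S d (xD n S ((1 - e) • w + e • v)))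
      (𝓝[>] 0) (𝓝 (qD S d (xD n S w))) :=
    ((continuous_qD S d).tendsto _).comp ((continuousAt_xD hc.ne').tendsto.comp hu)
  have hcpos : ∀ᶠ e : ℝ in 𝓝[>] 0, 0 < cD n S ((1 - e) • w + e • v) 1 1 :=
    (((continuous_cD n S 1 1).tendsto w).comp hu).eventually (lt_mem_nhds hc)
  refine le_of_tendsto_of_tendsto (hlim v) (hlim w) ?_
  filter_upwards [hcpos, Ioc_mem_nhdsGT one_pos] with e hce he
  exact qD_xD_perturbed_le_of_eOptimal hS hg hw hps hc hopt hv hvps he.1 he.2 hce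

lemma eOptimal_iff_forall_qSeq_le (hS : S.PosDef) (hg : IsExchangeablePrior g) (hw : IsDesign w)
    (hps : IsPseudoSymmetric n S w) (hc : 0 < cD n S w 1 1) :
    EOptimal n S g l0 w ↔ ∀ s : TrtSeq p t, qSeq S s (xD n S w) ≤ qD S w (xD n S w) := by
  refine ⟨fun hopt s => ?_, fun hle w' hw' => ?_⟩
  · have hs : IsDesign (Pi.single s 1) := single_mem_stdSimplex ℝ s
    rw [← qD_single, ← qD_symmetrize]
    exact qD_le_of_eOptimal hS hg hw hps hc hopt (isDesign_symmetrize hs)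
      (isPseudoSymmetric_symmetrize hs)
  · have ht := natCast_sub_one_pos_of_cD_ne_zero hc.ne'
    refine (Ecrit_le hS hg hw' (xD n S w)).trans ?_
    rw [Ecrit_eq hS hg hps hc]
    gcongr
    exact weightedSum_le_of_le hw'.1 hle

end Equivalence

theorem stmt14_general {p t n : ℕ} {S : Matrix (Fin p) (Fin p) ℝ} (hS : S.PosDef) (l0 : ℝ)
    {g : Measure (Fin t → ℝ)} (hg : IsExchangeablePrior g) {w : TrtSeq p t → ℝ}
    (hw : IsDesign w) (hps : IsPseudoSymmetric n S w) (hc22 : 0 < cD n S w 1 1)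
    (hq1 : 0 < qD S w (xD n S w)) :
    (EOptimal n S g l0 w ↔
      sSup (Set.range fun s : TrtSeq p t => qSeq S s (xD n S w) / qD S w (xD n S w)) = 1) ∧
    (EOptimal n S g l0 w → ∀ s : TrtSeq p t, 0 < w s →
      qSeq S s (xD n S w) / qD S w (xD n S w) = 1) := by
  have hopt : EOptimal n S g l0 w ↔ ∀ s : TrtSeq p t, qSeq S s (xD n S w) ≤ qD S w (xD n S w) :=
    eOptimal_iff_forall_qSeq_le hS hg hw hps hc22
  refine ⟨hopt.trans (sSup_range_div_weightedSum_eq_one_iff hw hq1).symm, fun h s hs => ?_⟩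
  rw [div_eq_one_iff_eq hq1.ne']
  exact eq_of_weightedSum_eq_of_le hw (hopt.1 h) rfl hs

/-- equivalence theorem for the E-criterion. -/
theorem stmt14 (p t n : ℕ) (hp : 2 ≤ p) (ht : 3 ≤ t) (hn : 1 ≤ n)
    (S : Matrix (Fin p) (Fin p) ℝ) (hS : S.PosDef)
    (l0 : ℝ) (g : Measure (Fin t → ℝ)) (hg : IsExchangeablePrior g)
    (w : TrtSeq p t → ℝ) (hw : IsDesign w) (hps : IsPseudoSymmetric n S w)
    (hc22 : 0 < cD n S w 1 1) (hq1 : 0 < qD S w (xD n S w)) :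
    (EOptimal n S g l0 w ↔
      sSup (Set.range fun s : TrtSeq p t =>
        qSeq S s (xD n S w) / qD S w (xD n S w)) = 1) ∧
    (EOptimal n S g l0 w → ∀ s : TrtSeq p t, 0 < w s →
      qSeq S s (xD n S w) / qD S w (xD n S w) = 1) :=
  stmt14_general hS l0 hg hw hps hc22 hq1
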